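/- arXiv:1311.3437 — 2 statements merged into one kernel-verified Lean document; each statement's English description precedes it below -/
import Mathlib

section
/- Let M > 0 and let Φ: [0,1] × [0,∞) → ℝ^m be continuous, differentiable in its first variable with ‖∂_s Φ(s,t)‖ ≤ M for all (s,t) ∈ [0,1] × [0,∞), and suppose ∫₀^∞ ∫₀¹ ‖Φ(s,t)‖² ds dt < ∞. Then there exists a sequence t_k → ∞ such that sup_{s∈[0,1]} ‖Φ(s, t_k)‖ → 0 as k → ∞. -/
/-!
By Fubini `t ↦ ∫₀¹ ‖Φ(s,t)‖² ds` is integrable on `[0,∞)`, and an integrable function tends to `0`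
along some sequence going to infinity. Along that sequence the slices `Φ(·, t_k)` tend to `0` in
measure. They are equi-Lipschitz by the bound on `∂_s Φ`, and for an equicontinuous family
convergence in measure forces pointwise convergence, because a neighbourhood on which the whole
family varies little has positive measure. On a compact set, equicontinuity upgrades pointwise to
uniform convergence.
-/

open MeasureTheory Set

/-- Euclidean dot product on `ℝ^n`. -/
def dotp {n : ℕ} (a b : Fin n → ℝ) : ℝ := ∑ i, a i * b i

/-- Euclidean norm on `ℝ^n`. -/
noncomputable def eNorm {n : ℕ} (a : Fin n → ℝ) : ℝ := Real.sqrt (∑ i, a i ^ 2)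

open Filter Topology

section

variable {ι X T E : Type*}

lemma exists_seq_tendsto_zero_of_integrableOn [MeasurableSpace T] {ν : Measure T}
    [NormedAddCommGroup E] {G : T → E} {S : Set T} {l : Filter T} [l.IsCountablyGenerated]
    (hG : IntegrableOn G S ν) (hS : ∀ U ∈ l, ν (U ∩ S) = ⊤) :
    ∃ u : ℕ → T, Tendsto u atTop l ∧ Tendsto (G ∘ u) atTop (𝓝 0) ∧ ∀ k, u k ∈ S := by
  have hfreq : ∃ᶠ t in l ⊓ comap G (𝓝 0), t ∈ S := by
    refine ((l.basis_sets.inf (Metric.nhds_basis_ball.comap G)).frequently_iff).2 ?_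
    rintro ⟨U, η⟩ ⟨hU, hη⟩
    by_contra! hlarge
    have hsub : U ∩ S ⊆ {t | η ≤ ‖G t‖} ∩ S := fun t ht =>
      ⟨not_lt.1 fun hlt => hlarge t ⟨ht.1, by simpa using hlt⟩ ht.2, ht.2⟩
    have hfin : ν.restrict S {t | η ≤ ‖G t‖} < ⊤ := hG.measure_norm_ge_lt_top hη
    exact ((measure_mono hsub).trans (Measure.le_restrict_apply S _)).not_gt (hS U hU ▸ hfin)
  obtain ⟨u, hu, huS⟩ := exists_seq_forall_of_frequently hfreq
  obtain ⟨hul, huG⟩ := tendsto_inf.1 hu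
  exact ⟨u, hul, tendsto_comap_iff.1 huG, huS⟩

lemma tendstoInMeasure_zero_of_tendsto_integral_norm_rpow [MeasurableSpace X] {μ : Measure X}
    [IsFiniteMeasure μ] [SeminormedAddCommGroup E] {F : ι → X → E} {l : Filter ι} {p : ℝ}
    (hp : 0 < p) (hF : ∀ i, Integrable (fun x => ‖F i x‖ ^ p) μ)
    (hlim : Tendsto (fun i => ∫ x, ‖F i x‖ ^ p ∂μ) l (𝓝 0)) :
    TendstoInMeasure μ F l 0 := by
  refine tendstoInMeasure_iff_measureReal_norm.2 fun ε hε => ?_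
  have hmarkov (i : ι) : μ.real {x | ε ≤ ‖F i x‖} ≤ (∫ x, ‖F i x‖ ^ p ∂μ) / ε ^ p := by
    rw [le_div_iff₀' (by positivity)]
    simpa only [Real.rpow_le_rpow_iff hε.le (norm_nonneg _) hp] using
      mul_meas_ge_le_integral_of_nonneg (.of_forall fun x => by positivity) (hF i) (ε ^ p)
  simpa using squeeze_zero (fun _ => measureReal_nonneg) hmarkov (by simpa using hlim.div_const _)

section Topology

variable [TopologicalSpace X] [MeasurableSpace X] [OpensMeasurableSpace X] {μ : Measure X}

lemma subset_support_restrict_of_subset_closure_interior [μ.IsOpenPosMeasure] {S : Set X}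
    (hS : S ⊆ closure (interior S)) : S ⊆ (μ.restrict S).support := by
  have hint : interior S ⊆ (μ.restrict S).support := by
    simpa [Measure.support_eq_univ] using Measure.interior_inter_support (μ := μ) (s := S)
  exact hS.trans (closure_minimal hint Measure.isClosed_support)

lemma tendsto_of_tendstoInMeasure_of_equicontinuousWithinAt [PseudoMetricSpace E]
    {F : ι → X → E} {f : X → E} {l : Filter ι} {S : Set X} {x : X}
    (hx : x ∈ (μ.restrict S).support) (hF : EquicontinuousWithinAt F S x)
    (hf : ContinuousWithinAt f S x) (hlim : TendstoInMeasure (μ.restrict S) F l f) :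
    Tendsto (F · x) l (𝓝 (f x)) := by
  refine Metric.tendsto_nhds.2 fun ε hε => ?_
  have hε3 : 0 < ε / 3 := by positivity
  obtain ⟨U, hU, hUF⟩ : ∃ U ∈ 𝓝[S] x, ∀ y ∈ U,
      (∀ i, dist (F i x) (F i y) < ε / 3) ∧ dist (f y) (f x) < ε / 3 :=
    ⟨_, (hF _ (Metric.dist_mem_uniformity hε3)).and (Metric.tendsto_nhds.1 hf _ hε3),
      fun _ hy => hy⟩
  have hUpos : 0 < μ.restrict S U := by
    obtain ⟨V, hVpos, hVU⟩ := ((Measure.mem_support_restrict.1 hx).and_eventually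
      (eventually_smallSets_subset.2 (inter_mem hU self_mem_nhdsWithin))).exists
    exact hVpos.trans_le ((measure_mono hVU).trans (Measure.le_restrict_apply S U))
  filter_upwards [(tendstoInMeasure_iff_dist.1 hlim _ hε3).eventually_lt_const hUpos] with i hi
  obtain ⟨y, hyU, hy⟩ : ∃ y ∈ U, dist (F i y) (f y) < ε / 3 := by
    by_contra! hfar
    exact hi.not_ge (measure_mono hfar)
  linarith [dist_triangle4 (F i x) (F i y) (f y) (f x), (hUF y hyU).1 i, (hUF y hyU).2]

end Topology

lemma tendstoUniformlyOn_of_equicontinuousOn_of_isCompact [TopologicalSpace X] [UniformSpace E]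
    {F : ι → X → E} {f : X → E} {l : Filter ι} {K : Set X} (hK : IsCompact K)
    (hF : EquicontinuousOn F K) (hlim : ∀ x ∈ K, Tendsto (F · x) l (𝓝 (f x))) :
    TendstoUniformlyOn F f l K := by
  have huniform := (EquicontinuousOn.tendsto_uniformOnFun_iff_pi' (𝔖 := {K})
    (by simpa using hK) (by simpa using hF) l f).2 (by simpa [tendsto_pi_nhds] using hlim)
  exact UniformOnFun.tendsto_iff_tendstoUniformlyOn.1 huniform K rfl

lemma tendsto_biSup_norm_of_tendstoUniformlyOn_zero [SeminormedAddCommGroup E] {F : ι → X → E}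
    {l : Filter ι} {S : Set X} (hF : TendstoUniformlyOn F 0 l S) :
    Tendsto (fun i => ⨆ x ∈ S, ‖F i x‖) l (𝓝 0) := by
  have hnonneg (i : ι) : 0 ≤ ⨆ x ∈ S, ‖F i x‖ :=
    Real.iSup_nonneg fun x => Real.iSup_nonneg fun _ => norm_nonneg (F i x)
  refine Metric.tendsto_nhds.2 fun ε hε => ?_
  filter_upwards [Metric.tendstoUniformlyOn_iff.1 hF (ε / 2) (by positivity)] with i hi
  have hle : ⨆ x ∈ S, ‖F i x‖ ≤ ε / 2 :=
    Real.iSup_le (fun x => Real.iSup_le (fun hx => by simpa using (hi x hx).le) (by positivity))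
      (by positivity)
  rw [Real.dist_0_eq_abs, abs_of_nonneg (hnonneg i)]
  linarith

lemma uniformEquicontinuousOn_of_norm_hasDerivWithinAt_le {𝕜 : Type*} [RCLike 𝕜]
    [NormedAddCommGroup E] [NormedSpace 𝕜 E] {F F' : ι → 𝕜 → E} {S : Set 𝕜} {M : ℝ}
    (hS : Convex ℝ S) (hder : ∀ i, ∀ s ∈ S, HasDerivWithinAt (F i) (F' i s) S s)
    (hbd : ∀ i, ∀ s ∈ S, ‖F' i s‖ ≤ M) : UniformEquicontinuousOn F S :=
  LipschitzOnWith.uniformEquicontinuousOn F M.toNNReal fun i =>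
    hS.lipschitzOnWith_of_nnnorm_hasDerivWithin_le (hder i) fun s hs =>
      NNReal.le_toNNReal_of_coe_le (hbd i s hs)

theorem exists_seq_tendstoUniformlyOn_zero_of_integrableOn_norm_rpow [TopologicalSpace X]
    [MeasurableSpace X] [OpensMeasurableSpace X] [MeasurableSpace T] {μ : Measure X} [SFinite μ]
    [IsFiniteMeasureOnCompacts μ] {ν : Measure T} [SFinite ν] [SeminormedAddCommGroup E]
    {Φ : X × T → E} {K : Set X} {S : Set T} {l : Filter T} [l.IsCountablyGenerated] {p : ℝ}
    (hp : 0 < p) (hK : IsCompact K) (hKm : MeasurableSet K) (hKμ : K ⊆ (μ.restrict K).support)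
    (hS : ∀ U ∈ l, ν (U ∩ S) = ⊤) (hΦ : EquicontinuousOn (fun (t : S) x => Φ (x, t)) K)
    (hint : IntegrableOn (fun z => ‖Φ z‖ ^ p) (K ×ˢ S) (μ.prod ν)) :
    ∃ u : ℕ → T, Tendsto u atTop l ∧ TendstoUniformlyOn (fun k x => Φ (x, u k)) 0 atTop K := by
  have hslices : IntegrableOn (fun t => ∫ x in K, ‖Φ (x, t)‖ ^ p ∂μ) S ν := by
    rw [IntegrableOn, ← Measure.prod_restrict] at hint
    exact hint.integral_prod_right
  obtain ⟨u, hul, hu0, huS⟩ := exists_seq_tendsto_zero_of_integrableOn hslices hS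
  have hequi : EquicontinuousOn (fun k x => Φ (x, u k)) K := hΦ.comp fun k => ⟨u k, huS k⟩
  have : IsFiniteMeasure (μ.restrict K) := ⟨by simpa using hK.measure_lt_top⟩
  have hslice (k : ℕ) : IntegrableOn (fun x => ‖Φ (x, u k)‖ ^ p) K μ :=
    ((hequi.continuousOn k).norm.rpow_const fun _ _ => .inr hp.le).integrableOn_compact' hK hKm
  have hmeas : TendstoInMeasure (μ.restrict K) (fun k x => Φ (x, u k)) atTop 0 :=
    tendstoInMeasure_zero_of_tendsto_integral_norm_rpow hp hslice hu0
  refine ⟨u, hul, tendstoUniformlyOn_of_equicontinuousOn_of_isCompact hK hequi fun x hx => ?_⟩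
  exact tendsto_of_tendstoInMeasure_of_equicontinuousWithinAt (hKμ hx) (hequi x hx)
    continuousWithinAt_const hmeas

theorem stmt11_general [NormedAddCommGroup E] [NormedSpace ℝ E] {a b c M p : ℝ} (hab : a < b)
    (hp : 0 < p) {Φ Φs : ℝ × ℝ → E}
    (hder : ∀ z ∈ Icc a b ×ˢ Ici c,
      HasDerivWithinAt (fun s => Φ (s, z.2)) (Φs z) (Icc a b) z.1)
    (hbd : ∀ z ∈ Icc a b ×ˢ Ici c, ‖Φs z‖ ≤ M)
    (hint : IntegrableOn (fun z => ‖Φ z‖ ^ p) (Icc a b ×ˢ Ici c)) :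
    ∃ tk : ℕ → ℝ, Tendsto tk atTop atTop ∧
      Tendsto (fun k => ⨆ s ∈ Icc a b, ‖Φ (s, tk k)‖) atTop (𝓝 0) := by
  have hequi : EquicontinuousOn (fun (t : Ici c) s => Φ (s, t)) (Icc a b) :=
    (uniformEquicontinuousOn_of_norm_hasDerivWithinAt_le (F' := fun (t : Ici c) s => Φs (s, t))
      (convex_Icc a b) (fun t s hs => hder (s, t) ⟨hs, t.2⟩)
      fun t s hs => hbd (s, t) ⟨hs, t.2⟩).equicontinuousOn
  have hsupp : Icc a b ⊆ (volume.restrict (Icc a b)).support :=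
    subset_support_restrict_of_subset_closure_interior (closure_interior_Icc hab.ne).ge
  have hfar : ∀ U ∈ (atTop : Filter ℝ), volume (U ∩ Ici c) = ⊤ := fun U hU => by
    obtain ⟨d, hd⟩ := mem_atTop_sets.1 (inter_mem hU (Ici_mem_atTop c))
    exact measure_mono_top hd Real.volume_Ici
  obtain ⟨tk, htk, hunif⟩ := exists_seq_tendstoUniformlyOn_zero_of_integrableOn_norm_rpow hp
    isCompact_Icc measurableSet_Icc hsupp hfar hequi hint
  exact ⟨tk, htk, tendsto_biSup_norm_of_tendstoUniformlyOn_zero hunif⟩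

end

lemma eNorm_eq_norm_toLp {n : ℕ} (a : Fin n → ℝ) : eNorm a = ‖WithLp.toLp 2 a‖ := by
  simp [eNorm, EuclideanSpace.norm_eq]

lemma dotp_self_eq_norm_toLp_sq {n : ℕ} (a : Fin n → ℝ) : dotp a a = ‖WithLp.toLp 2 a‖ ^ 2 := by
  rw [EuclideanSpace.norm_sq_eq]
  simp [dotp, pow_two]

/-- If `Φ : [0,1] × [0,∞) → ℝ^m` is continuous, differentiable in `s` with
`‖∂_s Φ‖ ≤ M`, and `∫₀^∞ ∫₀¹ ‖Φ(s,t)‖² ds dt < ∞`, then there is a sequence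
`t_k → ∞` with `sup_{s∈[0,1]} ‖Φ(s,t_k)‖ → 0`. -/
theorem stmt11 {m : ℕ} (M : ℝ) (hM : 0 < M)
    (Φ Φs : ℝ × ℝ → (Fin m → ℝ))
    (hΦ : ContinuousOn Φ (Set.Icc (0:ℝ) 1 ×ˢ Set.Ici (0:ℝ)))
    (hder : ∀ p ∈ Set.Icc (0:ℝ) 1 ×ˢ Set.Ici (0:ℝ),
      HasDerivWithinAt (fun s : ℝ => Φ (s, p.2)) (Φs p) (Set.Icc (0:ℝ) 1) p.1)
    (hbd : ∀ p ∈ Set.Icc (0:ℝ) 1 ×ˢ Set.Ici (0:ℝ), eNorm (Φs p) ≤ M)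
    (hint : IntegrableOn (fun p : ℝ × ℝ => dotp (Φ p) (Φ p))
      (Set.Icc (0:ℝ) 1 ×ˢ Set.Ici (0:ℝ))) :
    ∃ tk : ℕ → ℝ, Filter.Tendsto tk Filter.atTop Filter.atTop ∧
      Filter.Tendsto (fun j => ⨆ s ∈ Set.Icc (0:ℝ) 1, eNorm (Φ (s, tk j)))
        Filter.atTop (nhds 0) := by
  simp only [eNorm_eq_norm_toLp, dotp_self_eq_norm_toLp_sq, ← Real.rpow_two] at hbd hint ⊢
  exact stmt11_general (Φ := (WithLp.toLp 2 <| Φ ·)) (Φs := (WithLp.toLp 2 <| Φs ·)) one_pos two_pos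
    (fun p hp => (PiLp.hasFDerivAt_toLp 2 _).comp_hasDerivWithinAt p.1 (hder p hp)) hbd hint
end

section
/- Let f: ℝ × ℝ^m × ℝ^m → ℝ^m be continuously differentiable, and let x₁, x₂: ℝ → ℝ^m be twice continuously differentiable solutions of the second-order system ẍ(t) = f(t, x(t), ẋ(t)) for all t ∈ ℝ. If the set { t ∈ ℝ : x₁(t) = x₂(t) } has an accumulation point in ℝ, then x₁(t) = x₂(t) for all t ∈ ℝ. -/
/-!
At an accumulation point `t₀` of the coincidence set, the solutions agree by continuity, and so do
their velocities: a difference with nonzero derivative at `t₀` would have no zeros in a punctured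
neighbourhood of `t₀`. Hence the phase curves `(x₁, ẋ₁)` and `(x₂, ẋ₂)`, which solve the same
first-order system with right-hand side `(t, p, q) ↦ (q, f (t, p, q))`, agree at `t₀`, and
uniqueness for that system gives `x₁ = x₂`.
-/

open Filter Set Topology

/-- A time-dependent vector field `F (t, p)` is locally Lipschitz in the state `p`, locally
uniformly in the time `t`: the standard hypothesis for uniqueness of solutions of `ẏ = F (t, y)`.
Nothing is asked of `F` as a function of `t`. -/
def LocallyLipschitzInState {α E G : Type*} [TopologicalSpace α] [PseudoEMetricSpace E]
    [PseudoEMetricSpace G] (F : α × E → G) : Prop :=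
  ∀ a, ∃ K, ∃ U ∈ 𝓝 a, ∀ t, LipschitzOnWith K (fun p => F (t, p)) {p | (t, p) ∈ U}

theorem locallyLipschitzInState_of_locallyLipschitz {α E G : Type*} [PseudoEMetricSpace α]
    [PseudoEMetricSpace E] [PseudoEMetricSpace G] {F : α × E → G} (hF : LocallyLipschitz F) :
    LocallyLipschitzInState F := fun a => by
  obtain ⟨K, U, hU, hK⟩ := hF a
  exact ⟨K * 1, U, hU, fun t =>
    hK.comp (LipschitzWith.prodMk_left t).lipschitzOnWith fun _ hp => hp⟩

theorem LocallyLipschitzInState.prodMk_velocity {α E G : Type*} [TopologicalSpace α]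
    [PseudoEMetricSpace E] [PseudoEMetricSpace G] {f : α × E × E → G}
    (hf : LocallyLipschitzInState f) :
    LocallyLipschitzInState fun a : α × E × E => (a.2.2, f a) := fun a => by
  obtain ⟨K, U, hU, hK⟩ := hf a
  exact ⟨max 1 K, U, hU, fun t => LipschitzWith.prod_snd.lipschitzOnWith.prodMk (hK t)⟩

theorem hasDerivAt_unique_of_frequently_eq {𝕜 E : Type*} [NontriviallyNormedField 𝕜]
    [NormedAddCommGroup E] [NormedSpace 𝕜 E] {x y : 𝕜 → E} {x' y' : E} {t : 𝕜}
    (hx : HasDerivAt x x' t) (hy : HasDerivAt y y' t) (hxy : ∃ᶠ s in 𝓝[≠] t, x s = y s) :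
    x' = y' := by
  by_contra hne
  have hsub : ∀ᶠ s in 𝓝[≠] t, (x - y) s ≠ 0 := (hx.sub hy).eventually_ne (sub_ne_zero.2 hne)
  exact hxy (hsub.mono fun s hs h => hs (sub_eq_zero.2 h))

section Uniqueness

variable {E : Type*} [NormedAddCommGroup E] [NormedSpace ℝ E]

theorem LocallyLipschitzInState.eventuallyEq_of_hasDerivAt {F : ℝ × E → E}
    (hF : LocallyLipschitzInState F) {y z : ℝ → E} {t₀ : ℝ}
    (hy : ∀ᶠ t in 𝓝 t₀, HasDerivAt y (F (t, y t)) t)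
    (hz : ∀ᶠ t in 𝓝 t₀, HasDerivAt z (F (t, z t)) t) (h₀ : y t₀ = z t₀) : y =ᶠ[𝓝 t₀] z := by
  obtain ⟨K, U, hU, hK⟩ := hF (t₀, y t₀)
  have hyU : ∀ᶠ t in 𝓝 t₀, (t, y t) ∈ U :=
    (continuousAt_id.prodMk hy.self_of_nhds.continuousAt).eventually_mem hU
  have hzU : ∀ᶠ t in 𝓝 t₀, (t, z t) ∈ U :=
    (continuousAt_id.prodMk hz.self_of_nhds.continuousAt).eventually_mem (h₀ ▸ hU)
  exact ODE_solution_unique_of_eventually (v := fun t p => F (t, p))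
    (s := fun t => {p | (t, p) ∈ U}) (.of_forall hK) (hy.and hyU) (hz.and hzU) h₀

theorem LocallyLipschitzInState.eqOn_of_hasDerivAt {F : ℝ × E → E}
    (hF : LocallyLipschitzInState F) {I : Set ℝ} (hIo : IsOpen I) (hIc : IsPreconnected I)
    {y z : ℝ → E} (hy : ∀ t ∈ I, HasDerivAt y (F (t, y t)) t)
    (hz : ∀ t ∈ I, HasDerivAt z (F (t, z t)) t) {t₀ : ℝ} (ht₀ : t₀ ∈ I) (h₀ : y t₀ = z t₀) :
    EqOn y z I := by
  have hlocal : ∀ t ∈ I, y t = z t → y =ᶠ[𝓝 t] z := fun t ht h =>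
    have hIt : I ∈ 𝓝 t := hIo.mem_nhds ht
    hF.eventuallyEq_of_hasDerivAt (eventually_of_mem hIt hy) (eventually_of_mem hIt hz) h
  have hsub : I ⊆ {t | y =ᶠ[𝓝 t] z} := by
    refine hIc.subset_of_closure_inter_subset isOpen_setOfPred_eventually_nhds
      ⟨t₀, ht₀, hlocal t₀ ht₀ h₀⟩ ?_
    rintro t ⟨ht, htI⟩
    have hfreq : ∃ᶠ s in 𝓝 t, y s = z s :=
      (mem_closure_iff_frequently.1 ht).mono fun s hs => hs.eq_of_nhds
    exact hlocal t htI (tendsto_nhds_unique_of_frequently_eq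
      (hy t htI).continuousAt (hz t htI).continuousAt hfreq)
  exact fun t ht => (hsub ht).eq_of_nhds

/-- `x` solves `ẍ = f (t, x, ẋ)` on `I`. The two-sided `deriv` is the intended velocity when `I` is
open. -/
structure IsSecondOrderSolutionOn (f : ℝ × E × E → E) (x : ℝ → E) (I : Set ℝ) : Prop where
  differentiableAt : ∀ t ∈ I, DifferentiableAt ℝ x t
  hasDerivAt_deriv : ∀ t ∈ I, HasDerivAt (deriv x) (f (t, x t, deriv x t)) t

variable {f : ℝ × E × E → E}

theorem isSecondOrderSolutionOn_of_contDiff {x : ℝ → E} (hx : ContDiff ℝ 2 x) {I : Set ℝ}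
    (hsol : ∀ t ∈ I, deriv (deriv x) t = f (t, x t, deriv x t)) :
    IsSecondOrderSolutionOn f x I where
  differentiableAt t _ := hx.differentiable two_ne_zero t
  hasDerivAt_deriv t ht := hsol t ht ▸ (hx.differentiable_deriv_two t).hasDerivAt

theorem IsSecondOrderSolutionOn.hasDerivAt_phase {x : ℝ → E} {I : Set ℝ}
    (hx : IsSecondOrderSolutionOn f x I) {t : ℝ} (ht : t ∈ I) :
    HasDerivAt (fun s => (x s, deriv x s)) (deriv x t, f (t, x t, deriv x t)) t :=
  (hx.differentiableAt t ht).hasDerivAt.prodMk (hx.hasDerivAt_deriv t ht)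

theorem stmt12_general (hf : LocallyLipschitzInState f) {I : Set ℝ} (hIo : IsOpen I)
    (hIc : IsPreconnected I) {x₁ x₂ : ℝ → E} (hx₁ : IsSecondOrderSolutionOn f x₁ I)
    (hx₂ : IsSecondOrderSolutionOn f x₂ I) {t₀ : ℝ} (ht₀ : t₀ ∈ I)
    (hacc : AccPt t₀ (𝓟 {t | x₁ t = x₂ t})) : EqOn x₁ x₂ I := by
  have hfreq : ∃ᶠ t in 𝓝[≠] t₀, x₁ t = x₂ t := accPt_iff_frequently_nhdsNE.1 hacc
  have hd₁ := hx₁.differentiableAt t₀ ht₀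
  have hd₂ := hx₂.differentiableAt t₀ ht₀
  have hpos : x₁ t₀ = x₂ t₀ := tendsto_nhds_unique_of_frequently_eq hd₁.continuousAt
    hd₂.continuousAt (hfreq.filter_mono nhdsWithin_le_nhds)
  have hvel : deriv x₁ t₀ = deriv x₂ t₀ :=
    hasDerivAt_unique_of_frequently_eq hd₁.hasDerivAt hd₂.hasDerivAt hfreq
  have hphase : EqOn (fun t => (x₁ t, deriv x₁ t)) (fun t => (x₂ t, deriv x₂ t)) I :=
    hf.prodMk_velocity.eqOn_of_hasDerivAt hIo hIc (fun _ => hx₁.hasDerivAt_phase)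
      (fun _ => hx₂.hasDerivAt_phase) ht₀ (Prod.ext hpos hvel)
  exact fun t ht => congrArg Prod.fst (hphase ht)

end Uniqueness

/-- Two `C²` solutions of `ẍ = f(t,x,ẋ)` with `f` continuously differentiable that
agree on a set with an accumulation point agree everywhere. -/
theorem stmt12 {m : ℕ} (f : ℝ × (Fin m → ℝ) × (Fin m → ℝ) → (Fin m → ℝ))
    (hf : ContDiff ℝ 1 f)
    (x₁ x₂ : ℝ → (Fin m → ℝ)) (hx₁ : ContDiff ℝ 2 x₁) (hx₂ : ContDiff ℝ 2 x₂)
    (hsol₁ : ∀ t : ℝ, deriv (deriv x₁) t = f (t, x₁ t, deriv x₁ t))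
    (hsol₂ : ∀ t : ℝ, deriv (deriv x₂) t = f (t, x₂ t, deriv x₂ t))
    (hacc : ∃ t₀ : ℝ, AccPt t₀ (Filter.principal {t : ℝ | x₁ t = x₂ t})) :
    ∀ t : ℝ, x₁ t = x₂ t := by
  obtain ⟨t₀, ht₀⟩ := hacc
  exact fun t => stmt12_general
    (locallyLipschitzInState_of_locallyLipschitz hf.locallyLipschitz) isOpen_univ
    isPreconnected_univ (isSecondOrderSolutionOn_of_contDiff hx₁ fun t _ => hsol₁ t)
    (isSecondOrderSolutionOn_of_contDiff hx₂ fun t _ => hsol₂ t) (mem_univ t₀) ht₀ (mem_univ t)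
end
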